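/- Fix k > 0 and ν ∈ [0,1]. If 0 < a₁ ≤ a₂ and 0 < θ₁ ≤ θ₂, then the stable set {σa > 0 : F'_μ(ν, σa, k·σa, a₁, θ₁)[0] > 0} is contained in the stable set {σa > 0 : F'_μ(ν, σa, k·σa, a₂, θ₂)[0] > 0}; that is, along any ray σm = k·σa the system becomes more stable as a or θ increases. -/

import Mathlib

open MeasureTheory Real Set Filter

/-- Unnormalised stationary density ρ0[μ](x) of the McKean–Vlasov SDE
`dX = (aX − X³ − θ(X − m₁))dt + σa dB¹ + σm X ∘_ν dB²`. -/
noncomputable def rho0 (ν σa σm a θ μ x : ℝ) : ℝ :=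
  Real.exp (((a - θ - ν * σm ^ 2 + σa ^ 2 / σm ^ 2) / σm ^ 2) *
      Real.log (1 + (σm ^ 2 / σa ^ 2) * x ^ 2) +
    (2 * θ * μ / (σa * σm)) * Real.arctan (σm * x / σa) - x ^ 2 / σm ^ 2)

/-- Normalisation constant Z[μ] = ∫ ρ0[μ]. -/
noncomputable def Z (ν σa σm a θ μ : ℝ) : ℝ := ∫ x : ℝ, rho0 ν σa σm a θ μ x

/-- Self-consistency function F(ν,σa,σm,a,θ)[μ] = (∫ (x−μ)·ρ0[μ]) / Z[μ]. -/
noncomputable def F (ν σa σm a θ μ : ℝ) : ℝ :=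
  (∫ x : ℝ, (x - μ) * rho0 ν σa σm a θ μ x) / Z ν σa σm a θ μ

/-- F'_μ[0] : the derivative at μ = 0 of μ ↦ F(ν,σa,σm,a,θ)[μ]. -/
noncomputable def Fmu' (ν σa σm a θ : ℝ) : ℝ := deriv (fun μ => F ν σa σm a θ μ) 0

/-!
In the variable `y = σm x / σa` the density `ρ0[0]` is the weight
`w(y) = (1 + y²) ^ A * exp (-β y²)`, with `β = σa² / σm⁴` and `A = (a - θ) / σm² - ν + β`, and
`F'_μ[0]` has the sign of `I(A, t) = ∫ w (t y arctan y - 1)`, where `t = 2θ / σm²`. Raising `a`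
raises `A`; raising `θ` raises `t` and keeps `A + t / 2` fixed. Both moves multiply `w` by a power
of `1 + y²`, and both preserve positivity by Chebyshev's integral inequality. For the first, the
integrand `t y arctan y - 1` increases with `|y|`, as does the power. For the second, integrating
the derivative of `(1 + y²) w arctan y` gives
`I(A, t) = 2 ∫ w y arctan y (A + 1 - β + t / 2 - β y²)`, where the last factor is unchanged by the
move and decreases with `|y|`, as does the power.
-/

section Chebyshev

variable {α : Type*} [MeasurableSpace α] {m : Measure α} [SFinite m]
  {w f g : α → ℝ}

theorem integral_mul_integral_le_of_monovary (hw : 0 ≤ w) (hfg : Monovary f g)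
    (hw_int : Integrable w m) (hwf : Integrable (fun x => w x * f x) m)
    (hwg : Integrable (fun x => w x * g x) m) (hwfg : Integrable (fun x => w x * f x * g x) m) :
    (∫ x, w x * f x ∂m) * (∫ x, w x * g x ∂m) ≤ (∫ x, w x ∂m) * ∫ x, w x * f x * g x ∂m := by
  have h_nonneg : 0 ≤ ∫ z : α × α,
      w z.1 * w z.2 * ((f z.2 - f z.1) * (g z.2 - g z.1)) ∂(m.prod m) :=
    integral_nonneg fun z => mul_nonneg (mul_nonneg (hw _) (hw _)) (hfg.sub_mul_sub_nonneg _ _)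
  have h_expand : ∫ z : α × α, w z.1 * w z.2 * ((f z.2 - f z.1) * (g z.2 - g z.1)) ∂(m.prod m) =
      2 * ((∫ x, w x ∂m) * ∫ x, w x * f x * g x ∂m) -
        2 * ((∫ x, w x * f x ∂m) * ∫ x, w x * g x ∂m) := by
    calc
      _ = ∫ z : α × α, ((w z.1 * (w z.2 * f z.2 * g z.2) + w z.1 * f z.1 * g z.1 * w z.2) -
          (w z.1 * f z.1 * (w z.2 * g z.2) + w z.1 * g z.1 * (w z.2 * f z.2))) ∂(m.prod m) :=
        integral_congr_ae (ae_of_all _ fun z => by ring)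
      _ = (((∫ x, w x ∂m) * ∫ x, w x * f x * g x ∂m) +
            (∫ x, w x * f x * g x ∂m) * ∫ x, w x ∂m) -
          (((∫ x, w x * f x ∂m) * ∫ x, w x * g x ∂m) +
            (∫ x, w x * g x ∂m) * ∫ x, w x * f x ∂m) := by
        simp only [← integral_prod_mul]
        rw [← integral_add (hw_int.mul_prod hwfg) (hwfg.mul_prod hw_int),
          ← integral_add (hwf.mul_prod hwg) (hwg.mul_prod hwf)]
        exact integral_sub ((hw_int.mul_prod hwfg).add (hwfg.mul_prod hw_int))
          ((hwf.mul_prod hwg).add (hwg.mul_prod hwf))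
      _ = _ := by ring
  linarith

theorem integral_mul_mul_pos_of_monovary (hw : 0 ≤ w) (hfg : Monovary f g)
    (hw_int : Integrable w m) (hwf : Integrable (fun x => w x * f x) m)
    (hwg : Integrable (fun x => w x * g x) m) (hwfg : Integrable (fun x => w x * f x * g x) m)
    (hf_pos : 0 < ∫ x, w x * f x ∂m) (hg_pos : 0 < ∫ x, w x * g x ∂m) :
    0 < ∫ x, w x * f x * g x ∂m :=
  pos_of_mul_pos_right ((mul_pos hf_pos hg_pos).trans_le
    (integral_mul_integral_le_of_monovary hw hfg hw_int hwf hwg hwfg)) (integral_nonneg hw)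

end Chebyshev

section ExponentialTilt

variable {α : Type*} [MeasurableSpace α] {m : Measure α} {f g : α → ℝ} {M : ℝ}

theorem exp_mul_le_of_abs_le {t y T : ℝ} (ht : |t| ≤ T) (hy : |y| ≤ M) :
    exp (t * y) ≤ exp (T * M) := by
  refine exp_le_exp.mpr ((le_abs_self _).trans ?_)
  rw [abs_mul]
  exact mul_le_mul ht hy (abs_nonneg _) ((abs_nonneg _).trans ht)

theorem integrable_mul_exp_of_bounded (hf : Integrable f m) (hg : AEStronglyMeasurable g m)
    (hM : ∀ x, |g x| ≤ M) (t : ℝ) : Integrable (fun x => f x * exp (t * g x)) m :=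
  hf.mul_bdd (continuous_exp.comp_aestronglyMeasurable (hg.const_mul t)) (ae_of_all _ fun x => by
    rw [norm_eq_abs, abs_exp]; exact exp_mul_le_of_abs_le le_rfl (hM x))

theorem hasDerivAt_integral_mul_exp (hf : Integrable f m) (hg : AEStronglyMeasurable g m)
    (hM : ∀ x, |g x| ≤ M) (t₀ : ℝ) :
    HasDerivAt (fun t => ∫ x, f x * exp (t * g x) ∂m)
      (∫ x, f x * (exp (t₀ * g x) * g x) ∂m) t₀ := by
  have h_int := integrable_mul_exp_of_bounded hf hg hM
  refine (hasDerivAt_integral_of_dominated_loc_of_deriv_le (Metric.ball_mem_nhds t₀ one_pos)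
    (F' := fun t x => f x * (exp (t * g x) * g x))
    (bound := fun x => |f x| * (exp ((|t₀| + 1) * M) * M))
    (Eventually.of_forall fun t => (h_int t).aestronglyMeasurable) (h_int t₀) ?_
    (ae_of_all _ fun x t ht => ?_) (hf.abs.mul_const _) (ae_of_all _ fun x t _ => ?_)).2
  · exact hf.aestronglyMeasurable.mul
      ((continuous_exp.comp_aestronglyMeasurable (hg.const_mul t₀)).mul hg)
  · have ht' : |t| ≤ |t₀| + 1 := by
      have h_tri := abs_sub_abs_le_abs_sub t t₀
      rw [Metric.mem_ball, dist_eq] at ht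
      linarith
    rw [norm_eq_abs, abs_mul, abs_mul, abs_exp]
    exact mul_le_mul_of_nonneg_left (mul_le_mul (exp_mul_le_of_abs_le ht' (hM x)) (hM x)
      (abs_nonneg _) (exp_pos _).le) (abs_nonneg _)
  · simpa using (((hasDerivAt_id t).mul_const (g x)).exp).const_mul (f x)

end ExponentialTilt

section RealIntegral

theorem integral_eq_zero_of_odd {f : ℝ → ℝ} (hf : Function.Odd f) : ∫ x, f x = 0 := by
  have h := integral_neg_eq_self f volume
  simp only [hf _, integral_neg] at h
  linarith

theorem integral_sub_mul_comp_mul_div {f : ℝ → ℝ} {s : ℝ} (c : ℝ) (hs : s ≠ 0)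
    (hf : Integrable f) (hxf : Integrable (fun x => x * f x)) (hf_ne : ∫ x, f x ≠ 0) :
    (∫ x, (x - c) * f (s * x)) / ∫ x, f (s * x) =
      s⁻¹ * ((∫ x, x * f x) / ∫ x, f x) - c := by
  have h_numerator : ∫ x, (x - c) * f (s * x) =
      |s⁻¹| * (s⁻¹ * (∫ x, x * f x) - c * ∫ x, f x) := by
    rw [← integral_const_mul, ← integral_const_mul,
      ← integral_sub (hxf.const_mul _) (hf.const_mul _), ← smul_eq_mul,
      ← Measure.integral_comp_mul_left]
    refine integral_congr_ae (ae_of_all _ fun x => ?_)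
    field_simp
  rw [h_numerator, Measure.integral_comp_mul_left, smul_eq_mul,
    mul_div_mul_left _ _ (abs_ne_zero.mpr (inv_ne_zero hs)), sub_div,
    mul_div_cancel_right₀ _ hf_ne, mul_div_assoc]

end RealIntegral

section Arctan

theorem abs_arctan_le_pi_div_two (x : ℝ) : |arctan x| ≤ π / 2 :=
  abs_le.mpr ⟨(neg_pi_div_two_lt_arctan x).le, (arctan_lt_pi_div_two x).le⟩

theorem abs_mul_arctan_le (c x : ℝ) : |c * arctan x| ≤ |c| * (π / 2) := by
  rw [abs_mul]
  exact mul_le_mul_of_nonneg_left (abs_arctan_le_pi_div_two x) (abs_nonneg c)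

theorem mul_arctan_eq_abs (x : ℝ) : x * arctan x = |x| * arctan |x| := by
  rcases abs_choice x with h | h <;> simp [h]

theorem mul_arctan_nonneg (x : ℝ) : 0 ≤ x * arctan x := by
  rw [mul_arctan_eq_abs]
  exact mul_nonneg (abs_nonneg x) (arctan_nonneg.mpr (abs_nonneg x))

theorem mul_arctan_le_mul_arctan {x y : ℝ} (h : |x| ≤ |y|) : x * arctan x ≤ y * arctan y := by
  rw [mul_arctan_eq_abs x, mul_arctan_eq_abs y]
  exact mul_le_mul h (arctan_mono h) (arctan_nonneg.mpr (abs_nonneg x)) (abs_nonneg y)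

end Arctan

section Weight

theorem abs_le_one_add_sq (x : ℝ) : |x| ≤ 1 + x ^ 2 := by
  rw [← sq_abs]; nlinarith [sq_nonneg (|x| - 1), abs_nonneg x]

/-- The weight `(1 + x²) ^ A * exp (-β x²)`: up to rescaling `x`, the density `ρ0[0]`. -/
noncomputable def rationalGaussian (A β x : ℝ) : ℝ := (1 + x ^ 2) ^ A * exp (-β * x ^ 2)

variable {β : ℝ}

theorem rationalGaussian_pos (A β x : ℝ) : 0 < rationalGaussian A β x := by
  unfold rationalGaussian; positivity

@[fun_prop]
theorem continuous_rationalGaussian (A β : ℝ) : Continuous (rationalGaussian A β) := by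
  unfold rationalGaussian
  exact (Continuous.rpow_const (by fun_prop) fun x => Or.inl (by positivity)).mul (by fun_prop)

theorem rationalGaussian_neg (A β x : ℝ) :
    rationalGaussian A β (-x) = rationalGaussian A β x := by
  simp only [rationalGaussian, neg_sq]

theorem rationalGaussian_mul_rpow (A β d x : ℝ) :
    rationalGaussian A β x * (1 + x ^ 2) ^ d = rationalGaussian (A + d) β x := by
  unfold rationalGaussian
  rw [rpow_add (by positivity)]; ring

theorem rationalGaussian_add_one (A β x : ℝ) :
    rationalGaussian (A + 1) β x = rationalGaussian A β x * (1 + x ^ 2) := by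
  rw [← rationalGaussian_mul_rpow, rpow_one]

theorem integrable_rationalGaussian (A : ℝ) (hβ : 0 < β) : Integrable (rationalGaussian A β) := by
  have h_tendsto : Tendsto (fun x : ℝ => 1 + x ^ 2) (cocompact ℝ) atTop := by
    refine tendsto_atTop_add_const_left _ 1 ?_
    simpa only [Function.comp_def, norm_eq_abs, sq_abs] using
      (tendsto_pow_atTop two_ne_zero).comp (tendsto_norm_cocompact_atTop (E := ℝ))
  have h_rpow : (fun x : ℝ => (1 + x ^ 2) ^ A) =O[cocompact ℝ]
      fun x => exp (β / 2 * (1 + x ^ 2)) :=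
    ((isLittleO_rpow_exp_pos_mul_atTop A (half_pos hβ)).comp_tendsto h_tendsto).isBigO
  have h_bigO : rationalGaussian A β =O[cocompact ℝ]
      fun x => exp (β / 2) * exp (-(β / 2) * x ^ 2) := by
    refine (h_rpow.mul (Asymptotics.isBigO_refl (fun x => exp (-β * x ^ 2)) _)).congr
      (fun x => rfl) fun x => ?_
    rw [← exp_add, ← exp_add]; ring_nf
  exact (continuous_rationalGaussian A β).locallyIntegrable.integrable_of_isBigO_cocompact h_bigO
    (((integrable_exp_neg_mul_sq (half_pos hβ)).const_mul _).integrableAtFilter _)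

theorem integrable_rationalGaussian_mul (A : ℝ) (hβ : 0 < β) {p : ℝ → ℝ} {C : ℝ}
    (hp : Continuous p) (hC : ∀ x, |p x| ≤ C * (1 + x ^ 2)) :
    Integrable (fun x => rationalGaussian A β x * p x) := by
  refine ((integrable_rationalGaussian (A + 1) hβ).const_mul C).mono' (by fun_prop)
    (ae_of_all _ fun x => ?_)
  rw [norm_eq_abs, abs_mul, abs_of_pos (rationalGaussian_pos A β x), rationalGaussian_add_one,
    mul_left_comm]
  exact mul_le_mul_of_nonneg_left (hC x) (rationalGaussian_pos A β x).le

theorem integrable_rationalGaussian_mul_id (A : ℝ) (hβ : 0 < β) :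
    Integrable (fun x => rationalGaussian A β x * x) :=
  integrable_rationalGaussian_mul A hβ (C := 1) continuous_id fun x => by
    simpa using abs_le_one_add_sq x

theorem integrable_rationalGaussian_mul_arctan (A : ℝ) (hβ : 0 < β) :
    Integrable (fun x => rationalGaussian A β x * arctan x) :=
  integrable_rationalGaussian_mul A hβ (C := π / 2) continuous_arctan fun x =>
    (abs_arctan_le_pi_div_two x).trans (le_mul_of_one_le_right (by positivity) (by nlinarith))

theorem integrable_rationalGaussian_mul_mul_arctan (A : ℝ) (hβ : 0 < β) :
    Integrable (fun x => rationalGaussian A β x * (x * arctan x)) := by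
  refine integrable_rationalGaussian_mul A hβ (C := π / 2) (by fun_prop) fun x => ?_
  rw [abs_mul, mul_comm]
  exact mul_le_mul (abs_arctan_le_pi_div_two x) (abs_le_one_add_sq x) (abs_nonneg x)
    (by positivity)

theorem integrable_rationalGaussian_mul_mul_arctan_mul_sub (A q b : ℝ) (hβ : 0 < β) :
    Integrable (fun x => rationalGaussian A β x * (x * arctan x) * (q - b * x ^ 2)) := by
  refine (((integrable_rationalGaussian_mul_mul_arctan A hβ).const_mul (q + b)).sub
    ((integrable_rationalGaussian_mul_mul_arctan (A + 1) hβ).const_mul b)).congr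
    (ae_of_all _ fun x => ?_)
  simp only [Pi.sub_apply, rationalGaussian_add_one]
  ring

theorem integral_rationalGaussian_pos (A : ℝ) (hβ : 0 < β) :
    0 < ∫ x, rationalGaussian A β x :=
  integral_pos_of_integrable_nonneg_nonzero (x := 0) (by fun_prop)
    (integrable_rationalGaussian A hβ) (fun x => (rationalGaussian_pos A β x).le)
    (rationalGaussian_pos A β 0).ne'

theorem integral_rationalGaussian_mul_mul_arctan_pos (A : ℝ) (hβ : 0 < β) :
    0 < ∫ x, rationalGaussian A β x * (x * arctan x) :=
  integral_pos_of_integrable_nonneg_nonzero (x := 1) (by fun_prop)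
    (integrable_rationalGaussian_mul_mul_arctan A hβ)
    (fun x => mul_nonneg (rationalGaussian_pos A β x).le (mul_arctan_nonneg x))
    (mul_ne_zero (rationalGaussian_pos A β 1).ne' (by simp [pi_ne_zero]))

theorem integral_rationalGaussian_mul_id (A β : ℝ) : ∫ x, rationalGaussian A β x * x = 0 :=
  integral_eq_zero_of_odd fun x => by rw [rationalGaussian_neg, mul_neg]

end Weight

section StabilityIntegral

/-- The stability integral `∫ w (t x arctan x - 1)` against the weight `w = rationalGaussian A β`,
which has the sign of `F'_μ[0]`. -/
noncomputable def stabilityIntegral (A β t : ℝ) : ℝ :=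
  ∫ x, rationalGaussian A β x * (t * (x * arctan x) - 1)

variable {A A' β t d : ℝ}

theorem integrable_stabilityIntegrand (A t : ℝ) (hβ : 0 < β) :
    Integrable (fun x => rationalGaussian A β x * (t * (x * arctan x) - 1)) := by
  refine (((integrable_rationalGaussian_mul_mul_arctan A hβ).const_mul t).sub
    (integrable_rationalGaussian A hβ)).congr (ae_of_all _ fun x => ?_)
  simp only [Pi.sub_apply]
  ring

theorem stabilityIntegral_eq_sub (A t : ℝ) (hβ : 0 < β) :
    stabilityIntegral A β t = t * (∫ x, rationalGaussian A β x * (x * arctan x)) -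
      ∫ x, rationalGaussian A β x := by
  rw [← integral_const_mul, ← integral_sub
    ((integrable_rationalGaussian_mul_mul_arctan A hβ).const_mul t)
    (integrable_rationalGaussian A hβ)]
  exact integral_congr_ae (ae_of_all _ fun x => by ring)

theorem pos_of_stabilityIntegral_pos (h : 0 < stabilityIntegral A β t) : 0 < t := by
  by_contra! ht
  refine h.not_ge (integral_nonpos fun x =>
    mul_nonpos_of_nonneg_of_nonpos (rationalGaussian_pos A β x).le ?_)
  linarith [mul_nonpos_of_nonpos_of_nonneg ht (mul_arctan_nonneg x)]

theorem stabilityIntegral_pos_of_le (hβ : 0 < β) (hA : A ≤ A')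
    (h : 0 < stabilityIntegral A β t) : 0 < stabilityIntegral A' β t := by
  obtain ⟨d, rfl⟩ : ∃ d, A' = A + d := ⟨A' - A, by ring⟩
  have hd : 0 ≤ d := by linarith
  have h_monovary : Monovary (fun x : ℝ => (1 + x ^ 2) ^ d)
      (fun x => t * (x * arctan x) - 1) := fun x y hxy => by
    have h_abs : |x| ≤ |y| := by
      contrapose! hxy
      gcongr _ * ?_ - 1
      exacts [(pos_of_stabilityIntegral_pos h).le, mul_arctan_le_mul_arctan hxy.le]
    exact rpow_le_rpow (by positivity) (by gcongr 1 + ?_; exact sq_le_sq.mpr h_abs) hd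
  have h_pos := integral_mul_mul_pos_of_monovary (m := volume)
    (fun x => (rationalGaussian_pos A β x).le) h_monovary (integrable_rationalGaussian A hβ)
  simp only [rationalGaussian_mul_rpow] at h_pos
  exact h_pos (integrable_rationalGaussian _ hβ) (integrable_stabilityIntegrand A t hβ)
    (integrable_stabilityIntegrand _ t hβ) (integral_rationalGaussian_pos _ hβ) h

theorem hasDerivAt_rationalGaussian_add_one_mul_arctan (A β x : ℝ) :
    HasDerivAt (fun x => rationalGaussian (A + 1) β x * arctan x)
      (2 * (rationalGaussian A β x * (x * arctan x) * (A + 1 - β - β * x ^ 2)) +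
        rationalGaussian A β x) x := by
  have h_sq : HasDerivAt (fun x : ℝ => x ^ 2) (2 * x) x := by simpa using hasDerivAt_pow 2 x
  have h_base : 1 + x ^ 2 ≠ 0 := by positivity
  have h_weight := ((h_sq.const_add 1).rpow_const (p := A + 1) (Or.inl h_base)).mul
    (h_sq.const_mul (-β)).exp
  refine (h_weight.mul (hasDerivAt_arctan x)).congr_deriv ?_
  simp only [rationalGaussian, add_sub_cancel_right, Pi.mul_apply, rpow_add_one h_base]
  field_simp
  ring

theorem stabilityIntegral_eq_two_mul (A t : ℝ) (hβ : 0 < β) :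
    stabilityIntegral A β t = 2 * ∫ x, rationalGaussian A β x * (x * arctan x) *
      (A + 1 - β + t / 2 - β * x ^ 2) := by
  have h_poly := integrable_rationalGaussian_mul_mul_arctan_mul_sub A (A + 1 - β) β hβ
  have h_arctan := integrable_rationalGaussian_mul_mul_arctan A hβ
  have h_weight := integrable_rationalGaussian A hβ
  have h_parts := integral_eq_zero_of_hasDerivAt_of_integrable
    (hasDerivAt_rationalGaussian_add_one_mul_arctan A β) ((h_poly.const_mul 2).add h_weight)
    (integrable_rationalGaussian_mul_arctan (A + 1) hβ)
  rw [integral_add (h_poly.const_mul 2) h_weight, integral_const_mul] at h_parts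
  have h_split : ∫ x, rationalGaussian A β x * (x * arctan x) *
      (A + 1 - β + t / 2 - β * x ^ 2) =
      (∫ x, rationalGaussian A β x * (x * arctan x) * (A + 1 - β - β * x ^ 2)) +
        t / 2 * ∫ x, rationalGaussian A β x * (x * arctan x) := by
    rw [← integral_const_mul, ← integral_add h_poly (h_arctan.const_mul _)]
    exact integral_congr_ae (ae_of_all _ fun x => by ring)
  rw [stabilityIntegral_eq_sub A t hβ, h_split]
  linarith

theorem stabilityIntegral_sub_add_pos (hβ : 0 < β) (hd : 0 ≤ d)
    (h : 0 < stabilityIntegral A β t) : 0 < stabilityIntegral (A - d) β (t + 2 * d) := by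
  rw [stabilityIntegral_eq_two_mul _ _ hβ] at h ⊢
  rw [show A - d + 1 - β + (t + 2 * d) / 2 = A + 1 - β + t / 2 by ring, sub_eq_add_neg A d]
  generalize A + 1 - β + t / 2 = q at h ⊢
  have h_mul_rpow (x : ℝ) : rationalGaussian A β x * (x * arctan x) * (1 + x ^ 2) ^ (-d) =
      rationalGaussian (A + -d) β x * (x * arctan x) := by
    rw [mul_right_comm, rationalGaussian_mul_rpow]
  have h_monovary : Monovary (fun x : ℝ => (1 + x ^ 2) ^ (-d)) (fun x => q - β * x ^ 2) :=
    fun x y hxy => by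
      have h_sq : y ^ 2 ≤ x ^ 2 := by
        contrapose! hxy
        gcongr
      exact rpow_le_rpow_of_nonpos (by positivity) (by gcongr) (neg_nonpos.mpr hd)
  have h_pos := integral_mul_mul_pos_of_monovary (m := volume)
    (fun x => mul_nonneg (rationalGaussian_pos A β x).le (mul_arctan_nonneg x)) h_monovary
    (integrable_rationalGaussian_mul_mul_arctan A hβ)
  simp only [h_mul_rpow] at h_pos
  refine mul_pos two_pos (h_pos (integrable_rationalGaussian_mul_mul_arctan _ hβ)
    (integrable_rationalGaussian_mul_mul_arctan_mul_sub A q β hβ)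
    (integrable_rationalGaussian_mul_mul_arctan_mul_sub _ q β hβ)
    (integral_rationalGaussian_mul_mul_arctan_pos _ hβ) ?_)
  exact pos_of_mul_pos_right h zero_le_two

end StabilityIntegral

section SelfConsistency

/-- The exponent `A` of the weight `rationalGaussian A β` into which rescaling turns `ρ0[0]`. -/
noncomputable def rho0Exponent (ν σa σm a θ : ℝ) : ℝ :=
  (a - θ - ν * σm ^ 2 + σa ^ 2 / σm ^ 2) / σm ^ 2

/-- The Gaussian rate `β` of the weight `rationalGaussian A β` into which rescaling turns
`ρ0[0]`. -/
noncomputable def rho0Rate (σa σm : ℝ) : ℝ := σa ^ 2 / σm ^ 4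

variable {σa σm : ℝ}

theorem rho0Rate_pos (hσa : σa ≠ 0) (hσm : σm ≠ 0) : 0 < rho0Rate σa σm := by
  unfold rho0Rate; positivity

theorem rho0_eq (ν a θ μ x : ℝ) (hσa : σa ≠ 0) (hσm : σm ≠ 0) :
    rho0 ν σa σm a θ μ x =
      rationalGaussian (rho0Exponent ν σa σm a θ) (rho0Rate σa σm) (σm / σa * x) *
        exp (μ * (2 * θ / (σa * σm) * arctan (σm / σa * x))) := by
  unfold rho0 rationalGaussian rho0Exponent rho0Rate
  rw [rpow_def_of_pos (by positivity), ← exp_add, ← exp_add, mul_pow, div_pow,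
    div_mul_eq_mul_div σm σa x]
  congr 1
  field_simp
  ring

theorem F_eq (ν a θ μ : ℝ) (hσa : σa ≠ 0) (hσm : σm ≠ 0) :
    F ν σa σm a θ μ = σa / σm *
      ((∫ x, rationalGaussian (rho0Exponent ν σa σm a θ) (rho0Rate σa σm) x * x *
          exp (μ * (2 * θ / (σa * σm) * arctan x))) /
        ∫ x, rationalGaussian (rho0Exponent ν σa σm a θ) (rho0Rate σa σm) x *
          exp (μ * (2 * θ / (σa * σm) * arctan x))) - μ := by
  have hβ := rho0Rate_pos hσa hσm
  unfold F Z
  simp only [rho0_eq ν a θ _ _ hσa hσm]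
  generalize rho0Exponent ν σa σm a θ = A
  generalize rho0Rate σa σm = β at hβ ⊢
  generalize 2 * θ / (σa * σm) = c
  have h_integrable : Integrable (fun x => rationalGaussian A β x * exp (μ * (c * arctan x))) :=
    integrable_mul_exp_of_bounded (integrable_rationalGaussian A hβ) (by fun_prop)
      (abs_mul_arctan_le c) μ
  have h_integrable_id : Integrable (fun x => rationalGaussian A β x * x *
      exp (μ * (c * arctan x))) :=
    integrable_mul_exp_of_bounded (integrable_rationalGaussian_mul_id A hβ) (by fun_prop)
      (abs_mul_arctan_le c) μ
  have h_pos : 0 < ∫ x, rationalGaussian A β x * exp (μ * (c * arctan x)) :=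
    integral_pos_of_integrable_nonneg_nonzero (x := 0) (by fun_prop) h_integrable
      (fun x => (mul_pos (rationalGaussian_pos A β x) (exp_pos _)).le)
      (mul_pos (rationalGaussian_pos A β 0) (exp_pos _)).ne'
  have h_comm (x : ℝ) : rationalGaussian A β x * x * exp (μ * (c * arctan x)) =
      x * (rationalGaussian A β x * exp (μ * (c * arctan x))) := by ring
  simp only [h_comm] at h_integrable_id ⊢
  rw [← inv_div σm σa]
  exact integral_sub_mul_comp_mul_div μ (div_ne_zero hσm hσa) h_integrable h_integrable_id
    h_pos.ne'

theorem Fmu'_eq (ν a θ : ℝ) (hσa : σa ≠ 0) (hσm : σm ≠ 0) :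
    Fmu' ν σa σm a θ =
      stabilityIntegral (rho0Exponent ν σa σm a θ) (rho0Rate σa σm) (2 * θ / σm ^ 2) /
        ∫ x, rationalGaussian (rho0Exponent ν σa σm a θ) (rho0Rate σa σm) x := by
  have hβ := rho0Rate_pos hσa hσm
  unfold Fmu'
  simp only [F_eq ν a θ _ hσa hσm]
  generalize rho0Exponent ν σa σm a θ = A
  generalize rho0Rate σa σm = β at hβ ⊢
  have ht : 2 * θ / σm ^ 2 = σa / σm * (2 * θ / (σa * σm)) := by field_simp
  rw [stabilityIntegral_eq_sub A _ hβ, ht]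
  generalize 2 * θ / (σa * σm) = c
  have h_mean := hasDerivAt_integral_mul_exp (integrable_rationalGaussian_mul_id A hβ)
    (by fun_prop) (abs_mul_arctan_le c) 0
  have h_mass := hasDerivAt_integral_mul_exp (integrable_rationalGaussian A hβ)
    (by fun_prop) (abs_mul_arctan_le c) 0
  have h_mass_pos := integral_rationalGaussian_pos A hβ
  have h_mean_deriv : ∫ x, rationalGaussian A β x * x * (c * arctan x) =
      c * ∫ x, rationalGaussian A β x * (x * arctan x) := by
    rw [← integral_const_mul]
    exact integral_congr_ae (ae_of_all _ fun x => by ring)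
  have h_quotient := ((h_mean.div h_mass (by simpa using h_mass_pos.ne')).const_mul
    (σa / σm)).sub (hasDerivAt_id 0)
  refine h_quotient.deriv.trans ?_
  simp only [zero_mul, exp_zero, mul_one, one_mul, h_mean_deriv, integral_rationalGaussian_mul_id]
  field_simp
  ring

theorem Fmu'_pos_iff (ν a θ : ℝ) (hσa : σa ≠ 0) (hσm : σm ≠ 0) :
    0 < Fmu' ν σa σm a θ ↔
      0 < stabilityIntegral (rho0Exponent ν σa σm a θ) (rho0Rate σa σm) (2 * θ / σm ^ 2) := by
  rw [Fmu'_eq ν a θ hσa hσm]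
  exact div_pos_iff_of_pos_right (integral_rationalGaussian_pos _ (rho0Rate_pos hσa hσm))

end SelfConsistency

theorem stmt1_general (ν σa σm a₁ a₂ θ₁ θ₂ : ℝ) (hσa : σa ≠ 0) (hσm : σm ≠ 0) (ha : a₁ ≤ a₂)
    (hθ : θ₁ ≤ θ₂) (h : 0 < Fmu' ν σa σm a₁ θ₁) : 0 < Fmu' ν σa σm a₂ θ₂ := by
  rw [Fmu'_pos_iff ν _ _ hσa hσm] at h ⊢
  have hβ := rho0Rate_pos hσa hσm
  have hA : rho0Exponent ν σa σm a₁ θ₁ ≤ rho0Exponent ν σa σm a₂ θ₁ := by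
    unfold rho0Exponent; gcongr
  have hd : 0 ≤ (θ₂ - θ₁) / σm ^ 2 := div_nonneg (sub_nonneg.mpr hθ) (sq_nonneg σm)
  convert stabilityIntegral_sub_add_pos hβ hd (stabilityIntegral_pos_of_le hβ hA h) using 2
  · unfold rho0Exponent; ring
  · ring

/-- Along any ray σm = k·σa, the stable set of additive noise intensities is
monotone in the aggregating parameters a and θ: increasing a or θ makes the system more stable. -/
theorem stmt1 (k ν a₁ a₂ θ₁ θ₂ : ℝ) (hk : 0 < k) (hν : ν ∈ Set.Icc (0 : ℝ) 1)
    (ha₁ : 0 < a₁) (ha : a₁ ≤ a₂) (hθ₁ : 0 < θ₁) (hθ : θ₁ ≤ θ₂) :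
    {σa : ℝ | 0 < σa ∧ 0 < Fmu' ν σa (k * σa) a₁ θ₁} ⊆
      {σa : ℝ | 0 < σa ∧ 0 < Fmu' ν σa (k * σa) a₂ θ₂} := by
  rintro σa ⟨hσa, h⟩
  exact ⟨hσa, stmt1_general ν σa (k * σa) a₁ a₂ θ₁ θ₂ hσa.ne' (mul_pos hk hσa).ne' ha hθ h⟩
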